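/- For every m ≥ 1 and n ≥ 0, the signed number of matchings of G(m,−(2+n)) equals ε_{m,n} · T(m,n): M(G(m,−(2+n))) = ε_{m,n} · T(m,n). (This identifies the extrapolated tiling count T(m,−2−n) combinatorially as a signed matching count and establishes the reciprocity relation.) -/

import Mathlib

open Finset

/-- The m-by-n grid graph on `Fin m × Fin n`: vertices are adjacent iff they agree in
one coordinate and differ by exactly 1 in the other. -/
def grid (m n : ℕ) : SimpleGraph (Fin m × Fin n) :=
  SimpleGraph.fromRel (fun p q =>
    (p.1 = q.1 ∧ (p.2 : ℕ) + 1 = q.2) ∨ (p.2 = q.2 ∧ (p.1 : ℕ) + 1 = q.1))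

/-- A perfect matching: a set of edges of `G` such that every vertex belongs to
exactly one edge of the set. -/
def IsPM {V : Type*} (G : SimpleGraph V) (P : Finset (Sym2 V)) : Prop :=
  (∀ e ∈ P, e ∈ G.edgeSet) ∧ ∀ v : V, ∃! e, e ∈ P ∧ v ∈ e

/-- `T m n` is the number of perfect matchings of the m-by-n grid graph. -/
noncomputable def T (m n : ℕ) : ℕ :=
  {P : Finset (Sym2 (Fin m × Fin n)) | IsPM (grid m n) P}.ncard

open scoped Classical in
/-- The finset of all perfect matchings of a graph on a finite vertex type. -/
noncomputable def pmFinset {V : Type*} [Fintype V] [DecidableEq V]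
    (G : SimpleGraph V) : Finset (Finset (Sym2 V)) :=
  Finset.univ.filter (fun P => IsPM G P)

open scoped Classical in
/-- The number of vertical edges in `P` (edges whose endpoints differ in the
first, i.e. row, coordinate). -/
noncomputable def vert {m n : ℕ} (P : Finset (Sym2 (Fin m × Fin n))) : ℕ :=
  (P.filter (fun e => ∃ p q : Fin m × Fin n, e = s(p, q) ∧ p.1 ≠ q.1)).card

/-- The underlying graph of the signed graph `G(m,-k)`: all horizontal edges, and
vertical edges only in columns 1 through k (0-indexed). -/
def negGrid (m k : ℕ) : SimpleGraph (Fin m × Fin (k + 2)) :=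
  SimpleGraph.fromRel (fun p q =>
    (p.1 = q.1 ∧ (p.2 : ℕ) + 1 = q.2) ∨
    (p.2 = q.2 ∧ (p.1 : ℕ) + 1 = q.1 ∧ 1 ≤ (p.2 : ℕ) ∧ (p.2 : ℕ) ≤ k))

/-- The signed number of matchings `M(G(m,-k))`: every vertical edge has weight -1,
every horizontal edge weight +1. -/
noncomputable def Msigned (m k : ℕ) : ℤ :=
  ∑ P ∈ pmFinset (negGrid m k), (-1 : ℤ) ^ vert P

/-- ε_{m,n}: -1 if m ≡ 2 (mod 4) and n is odd, +1 otherwise. -/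
def eps (m n : ℕ) : ℤ := if m % 4 = 2 ∧ Odd n then -1 else 1

/-!
The first and last columns of `G(m,-(2+n))` carry no vertical edges, so their vertices are pendant
and every perfect matching contains the `2m` horizontal edges at the two sides.  These edges cover
columns `0, 1, n + 2, n + 3`, and what remains is a copy of `G(m,n)`; hence there are exactly
`T(m,n)` perfect matchings.

All of them have the same sign.  Give a vertex in row `i` the weight `(-1)^i`: the product of the
weights of the two ends of an edge is `-1` on vertical edges and `1` on horizontal ones, so the sign
of a perfect matching is the product of the weights of all vertices, whatever the matching.
-/

namespace IsPM

variable {V : Type*} {G : SimpleGraph V} {P : Finset (Sym2 V)}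

lemma mk_mem_of_forall_adj_eq (hP : IsPM G P) {u w : V} (hu : ∀ x, G.Adj u x → x = w) :
    s(u, w) ∈ P := by
  obtain ⟨_, ⟨hmem, x, rfl⟩, -⟩ := hP.2 u
  rwa [hu x (hP.1 _ hmem)] at hmem

variable [Fintype V] {M : Type*} [CommMonoid M]

lemma prod_univ_eq_prod_toFinset [DecidableEq V] (hP : IsPM G P) (f : V → M) :
    ∏ v, f v = ∏ e ∈ P, ∏ v ∈ e.toFinset, f v := by
  have hcover : univ = P.biUnion Sym2.toFinset := by
    ext v
    simpa using (hP.2 v).exists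
  have hdisjoint : (P : Set (Sym2 V)).PairwiseDisjoint Sym2.toFinset := by
    intro e he e' he' hne
    rw [Function.onFun, Finset.disjoint_left]
    intro v hv hv'
    rw [Sym2.mem_toFinset] at hv hv'
    exact hne ((hP.2 v).unique ⟨he, hv⟩ ⟨he', hv'⟩)
  rw [hcover, Finset.prod_biUnion hdisjoint]

lemma prod_univ_eq_prod_edges (hP : IsPM G P) {f : V → M} {g : Sym2 V → M}
    (hfg : ∀ u v, G.Adj u v → f u * f v = g s(u, v)) :
    ∏ v, f v = ∏ e ∈ P, g e := by
  classical
  rw [hP.prod_univ_eq_prod_toFinset]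
  refine Finset.prod_congr rfl fun e he => ?_
  induction e with | _ u v
  have huv : G.Adj u v := hP.1 _ he
  rw [Sym2.toFinset_mk_eq, Finset.prod_pair huv.ne, hfg u v huv]

lemma even_card (hP : IsPM G P) : Even (Fintype.card V) := by
  have hprod : ∏ _v : V, (-1 : ℤ) = ∏ _e ∈ P, 1 := hP.prod_univ_eq_prod_edges (by simp)
  rwa [Finset.prod_const, Finset.prod_const_one, Finset.card_univ,
    neg_one_pow_eq_one_iff_even (by decide)] at hprod

end IsPM

lemma mem_pmFinset {V : Type*} [Fintype V] [DecidableEq V] {G : SimpleGraph V}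
    {P : Finset (Sym2 V)} : P ∈ pmFinset G ↔ IsPM G P := by
  simp [pmFinset]

lemma T_eq_card_pmFinset (m n : ℕ) : T m n = #(pmFinset (grid m n)) := by
  rw [T, ← Set.ncard_coe_finset]
  congr 1
  ext P
  simp [mem_pmFinset]

/-- A set of edges of `G` that misses `S` and covers every vertex outside `S` exactly once, i.e. a
perfect matching of `G` with the vertices of `S` deleted, kept as edges of `G`. -/
structure IsPMOutside {V : Type*} (G : SimpleGraph V) (S : Set V) (F : Finset (Sym2 V)) :
    Prop where
  mem_edgeSet : ∀ e ∈ F, e ∈ G.edgeSet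
  notMem : ∀ e ∈ F, ∀ v ∈ e, v ∉ S
  existsUnique : ∀ v ∉ S, ∃! e, e ∈ F ∧ v ∈ e

namespace IsPMOutside

variable {V W : Type*} [DecidableEq V] {G : SimpleGraph V} {H : SimpleGraph W} {φ : H ↪g G}
  {F : Finset (Sym2 V)}

lemma map_mem_union_map_iff (hF : IsPMOutside G (Set.range φ) F) {P : Finset (Sym2 W)}
    {e : Sym2 W} : e.map φ ∈ F ∪ P.map φ.toEmbedding.sym2Map ↔ e ∈ P := by
  have hnotMem : e.map φ ∉ F := by
    induction e with | _ u v
    exact fun he => hF.notMem _ he (φ u) (Sym2.mem_mk_left _ _) ⟨u, rfl⟩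
  rw [Finset.mem_union, or_iff_right hnotMem]
  exact Finset.mem_map' φ.toEmbedding.sym2Map

lemma mem_union_map_and_mem_iff {P : Finset (Sym2 W)} {e : Sym2 V} {v : V}
    (hv : v ∉ Set.range φ) : e ∈ F ∪ P.map φ.toEmbedding.sym2Map ∧ v ∈ e ↔ e ∈ F ∧ v ∈ e := by
  refine and_congr_left fun hve => ?_
  rw [Finset.mem_union, or_iff_left]
  intro he
  obtain ⟨e', -, rfl⟩ := Finset.mem_map.1 he
  obtain ⟨w, -, rfl⟩ := Sym2.mem_map.1 hve
  exact hv ⟨w, rfl⟩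

lemma existsUnique_apply_mem_iff (hF : IsPMOutside G (Set.range φ) F) {P : Finset (Sym2 W)}
    {w : W} : (∃! e, e ∈ F ∪ P.map φ.toEmbedding.sym2Map ∧ φ w ∈ e) ↔ ∃! e, e ∈ P ∧ w ∈ e := by
  have hinj : Function.Injective (Sym2.map φ) := Sym2.map.injective φ.injective
  have hmem (e : Sym2 W) :
      e.map φ ∈ F ∪ P.map φ.toEmbedding.sym2Map ∧ φ w ∈ e.map φ ↔ e ∈ P ∧ w ∈ e := by
    rw [hF.map_mem_union_map_iff, Sym2.mem_map]
    simp
  have hlift (e : Sym2 V) (he : e ∈ F ∪ P.map φ.toEmbedding.sym2Map ∧ φ w ∈ e) :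
      ∃ e' : Sym2 W, e'.map φ = e := by
    rcases Finset.mem_union.1 he.1 with heF | heP
    · exact absurd ⟨w, rfl⟩ (hF.notMem e heF _ he.2)
    · obtain ⟨e', -, heq⟩ := Finset.mem_map.1 heP
      exact ⟨e', heq⟩
  constructor
  · rintro ⟨e, he, huniq⟩
    obtain ⟨e, rfl⟩ := hlift e he
    exact ⟨e, (hmem e).1 he, fun e' he' => hinj (huniq _ ((hmem e').2 he'))⟩
  · rintro ⟨e, he, huniq⟩
    refine ⟨e.map φ, (hmem e).2 he, fun e' he' => ?_⟩
    obtain ⟨e', rfl⟩ := hlift e' he'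
    rw [huniq e' ((hmem e').1 he')]

lemma isPM_union_map_iff (hF : IsPMOutside G (Set.range φ) F) {P : Finset (Sym2 W)} :
    IsPM G (F ∪ P.map φ.toEmbedding.sym2Map) ↔ IsPM H P := by
  refine and_congr ?_ ⟨fun hcover w => ?_, fun hcover v => ?_⟩
  · rw [Finset.forall_mem_union, and_iff_right hF.mem_edgeSet, Finset.forall_mem_map]
    exact forall₂_congr fun _ _ => φ.map_mem_edgeSet_iff
  · exact hF.existsUnique_apply_mem_iff.1 (hcover (φ w))
  · by_cases hv : v ∈ Set.range φ
    · obtain ⟨w, rfl⟩ := hv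
      exact hF.existsUnique_apply_mem_iff.2 (hcover w)
    · simpa only [mem_union_map_and_mem_iff hv] using hF.existsUnique v hv

lemma exists_union_map_eq (hF : IsPMOutside G (Set.range φ) F) {Q : Finset (Sym2 V)}
    (hQ : IsPM G Q) (hFQ : F ⊆ Q) :
    ∃ P : Finset (Sym2 W), F ∪ P.map φ.toEmbedding.sym2Map = Q := by
  have hinj : Function.Injective (Sym2.map φ) := Sym2.map.injective φ.injective
  have mem_or_exists_map_eq (e : Sym2 V) (he : e ∈ Q) : e ∈ F ∨ ∃ e' : Sym2 W, e'.map φ = e := by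
    by_cases hrange : ∀ v ∈ e, v ∈ Set.range φ
    · induction e with | _ u v
      obtain ⟨⟨u, rfl⟩, ⟨v, rfl⟩⟩ := Sym2.forall_mem_pair.1 hrange
      exact .inr ⟨s(u, v), rfl⟩
    · push Not at hrange
      obtain ⟨v, hve, hv⟩ := hrange
      obtain ⟨f, ⟨hfF, hvf⟩, -⟩ := hF.existsUnique v hv
      exact .inl ((hQ.2 v).unique ⟨he, hve⟩ ⟨hFQ hfF, hvf⟩ ▸ hfF)
  refine ⟨Q.preimage (Sym2.map φ) hinj.injOn, Finset.Subset.antisymm ?_ fun e he => ?_⟩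
  · refine Finset.union_subset hFQ fun e he => ?_
    obtain ⟨e', he', rfl⟩ := Finset.mem_map.1 he
    exact Finset.mem_preimage.1 he'
  · obtain heF | ⟨e, rfl⟩ := mem_or_exists_map_eq e he
    · exact Finset.mem_union_left _ heF
    · exact hF.map_mem_union_map_iff.2 (Finset.mem_preimage.2 he)

lemma card_pmFinset_eq [Fintype V] [Fintype W] [DecidableEq W]
    (hF : IsPMOutside G (Set.range φ) F) (hforced : ∀ Q, IsPM G Q → F ⊆ Q) :
    #(pmFinset G) = #(pmFinset H) := by
  symm
  refine Finset.card_nbij (fun P => F ∪ P.map φ.toEmbedding.sym2Map) ?_ ?_ ?_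
  · exact fun P hP => mem_pmFinset.2 (hF.isPM_union_map_iff.2 (mem_pmFinset.1 hP))
  · intro P _ P' _ (h : F ∪ P.map _ = F ∪ P'.map _)
    ext e
    rw [← hF.map_mem_union_map_iff, h, hF.map_mem_union_map_iff]
  · intro Q hQ
    have hQ : IsPM G Q := mem_pmFinset.1 hQ
    obtain ⟨P, rfl⟩ := hF.exists_union_map_eq hQ (hforced Q hQ)
    exact ⟨P, mem_pmFinset.2 (hF.isPM_union_map_iff.1 hQ), rfl⟩

end IsPMOutside

lemma grid_adj_iff {m n : ℕ} {p q : Fin m × Fin n} : (grid m n).Adj p q ↔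
    (p.1 : ℕ) = q.1 ∧ ((p.2 : ℕ) + 1 = q.2 ∨ (q.2 : ℕ) + 1 = p.2) ∨
    (p.2 : ℕ) = q.2 ∧ ((p.1 : ℕ) + 1 = q.1 ∨ (q.1 : ℕ) + 1 = p.1) := by
  simp only [grid, SimpleGraph.fromRel_adj, ne_eq, Prod.ext_iff, Fin.ext_iff]
  lia

lemma negGrid_adj_iff {m k : ℕ} {p q : Fin m × Fin (k + 2)} : (negGrid m k).Adj p q ↔
    (p.1 : ℕ) = q.1 ∧ ((p.2 : ℕ) + 1 = q.2 ∨ (q.2 : ℕ) + 1 = p.2) ∨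
    (p.2 : ℕ) = q.2 ∧ ((p.1 : ℕ) + 1 = q.1 ∨ (q.1 : ℕ) + 1 = p.1) ∧
      1 ≤ (p.2 : ℕ) ∧ (p.2 : ℕ) ≤ k := by
  simp only [negGrid, SimpleGraph.fromRel_adj, ne_eq, Prod.ext_iff, Fin.ext_iff]
  lia

lemma exists_mk_eq_and_fst_ne_iff {α β : Type*} {p q : α × β} :
    (∃ p' q' : α × β, s(p, q) = s(p', q') ∧ p'.1 ≠ q'.1) ↔ p.1 ≠ q.1 := by
  constructor
  · rintro ⟨p', q', heq, hne⟩
    rcases Sym2.eq_iff.1 heq with ⟨rfl, rfl⟩ | ⟨rfl, rfl⟩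
    exacts [hne, hne.symm]
  · exact fun hne => ⟨p, q, rfl, hne⟩

lemma prod_neg_one_pow_fst (m N : ℕ) :
    ∏ v : Fin m × Fin N, (-1 : ℤ) ^ (v.1 : ℕ) = (-1) ^ (m.choose 2 * N) := by
  simp only [Fintype.prod_prod_type, Finset.prod_const, Finset.card_univ, Fintype.card_fin]
  rw [Finset.prod_pow, Fin.prod_univ_eq_prod_range (fun i => (-1 : ℤ) ^ i),
    Finset.prod_pow_eq_pow_sum, Finset.sum_range_id, ← Nat.choose_two_right, pow_mul]

lemma IsPM.neg_one_pow_vert {m N : ℕ} {G : SimpleGraph (Fin m × Fin N)}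
    {P : Finset (Sym2 (Fin m × Fin N))} (hP : IsPM G P)
    (hG : ∀ p q, G.Adj p q →
      (p.1 : ℕ) = q.1 ∨ (p.1 : ℕ) + 1 = q.1 ∨ (q.1 : ℕ) + 1 = p.1) :
    (-1 : ℤ) ^ vert P = (-1) ^ (m.choose 2 * N) := by
  classical
  rw [vert, ← Finset.prod_const, Finset.prod_filter, ← prod_neg_one_pow_fst]
  refine (hP.prod_univ_eq_prod_edges fun p q hpq => ?_).symm
  simp only [exists_mk_eq_and_fst_ne_iff]
  rcases hG p q hpq with h | h | h
  · rw [if_neg (not_not.2 (Fin.ext h)), h, ← pow_add, (Even.add_self _).neg_one_pow]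
  · rw [if_pos (by lia), ← h, ← pow_add, Odd.neg_one_pow (by grind)]
  · rw [if_pos (by lia), ← h, ← pow_add, Odd.neg_one_pow (by grind)]

lemma eps_add_two (m n : ℕ) : eps m (n + 2) = eps m n := by
  simp only [eps, Nat.odd_add, even_two, iff_true]

lemma even_add_self_choose_two_iff (c : ℕ) : Even ((c + c).choose 2) ↔ Even c := by
  rw [Nat.choose_two_right, ← mul_two, mul_right_comm, Nat.mul_div_cancel _ two_pos, Nat.even_mul]
  grind

lemma neg_one_pow_choose_two_mul {m N : ℕ} (h : Even (m * N)) :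
    (-1 : ℤ) ^ (m.choose 2 * N) = eps m N := by
  rcases Nat.even_or_odd N with hN | hN
  · rw [(hN.mul_left _).neg_one_pow, eps, if_neg fun hodd => Nat.not_even_iff_odd.2 hodd.2 hN]
  · obtain ⟨c, rfl⟩ : Even m := (Nat.even_mul.1 h).resolve_right (Nat.not_even_iff_odd.2 hN)
    simp only [eps, neg_one_pow_eq_ite, Nat.even_mul, even_add_self_choose_two_iff]
    grind

lemma IsPM.neg_one_pow_vert_eq_eps {m k : ℕ} {Q : Finset (Sym2 (Fin m × Fin (k + 2)))}
    (hQ : IsPM (negGrid m k) Q) : (-1 : ℤ) ^ vert Q = eps m k := by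
  have heven : Even (m * (k + 2)) := by simpa using hQ.even_card
  rw [hQ.neg_one_pow_vert fun p q hpq => by have := negGrid_adj_iff.1 hpq; lia,
    neg_one_pow_choose_two_mul heven, eps_add_two]

lemma Msigned_eq_eps_mul_card (m k : ℕ) : Msigned m k = eps m k * #(pmFinset (negGrid m k)) := by
  rw [Msigned, Finset.sum_congr rfl fun Q hQ => (mem_pmFinset.1 hQ).neg_one_pow_vert_eq_eps,
    Finset.sum_const, nsmul_eq_mul, mul_comm]

/-- The copy of `G(m,n)` in columns `2, …, n + 1` of `G(m,-(2+n))`. -/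
def innerGrid (m n : ℕ) : grid m n ↪g negGrid m (2 + n) where
  toFun p := (p.1, ⟨p.2 + 2, by lia⟩)
  inj' p q h := by
    simp only [Prod.ext_iff, Fin.ext_iff] at h ⊢
    lia
  map_rel_iff' {p q} := by
    rw [negGrid_adj_iff, grid_adj_iff]
    dsimp only [DFunLike.coe]
    lia

@[simp]
lemma innerGrid_apply (m n : ℕ) (p : Fin m × Fin n) :
    innerGrid m n p = (p.1, ⟨p.2 + 2, by lia⟩) :=
  rfl

lemma mem_range_innerGrid_iff {m n : ℕ} {v : Fin m × Fin (2 + n + 2)} :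
    v ∈ Set.range (innerGrid m n) ↔ 2 ≤ (v.2 : ℕ) ∧ (v.2 : ℕ) < n + 2 := by
  constructor
  · rintro ⟨p, rfl⟩
    simp
  · rintro ⟨hle, hlt⟩
    refine ⟨(v.1, ⟨v.2 - 2, by lia⟩), Prod.ext rfl (Fin.ext ?_)⟩
    exact Nat.sub_add_cancel hle

/-- The edge of `G(m,-(2+n))` joining columns `0` and `1` in row `i`. -/
def leftEdge (m n : ℕ) (i : Fin m) : Sym2 (Fin m × Fin (2 + n + 2)) :=
  s((i, ⟨0, by lia⟩), (i, ⟨1, by lia⟩))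

/-- The edge of `G(m,-(2+n))` joining the last two columns, `n + 3` and `n + 2`, in row `i`. -/
def rightEdge (m n : ℕ) (i : Fin m) : Sym2 (Fin m × Fin (2 + n + 2)) :=
  s((i, ⟨n + 3, by lia⟩), (i, ⟨n + 2, by lia⟩))

/-- The horizontal edges of `G(m,-(2+n))` at its two sides; they belong to every perfect
matching. -/
def sideEdges (m n : ℕ) : Finset (Sym2 (Fin m × Fin (2 + n + 2))) :=
  univ.image (leftEdge m n) ∪ univ.image (rightEdge m n)

section

variable {m n : ℕ}

lemma mem_leftEdge_iff {i : Fin m} {v : Fin m × Fin (2 + n + 2)} :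
    v ∈ leftEdge m n i ↔ v.1 = i ∧ (v.2 : ℕ) ≤ 1 := by
  simp only [leftEdge, Sym2.mem_iff, Prod.ext_iff, Fin.ext_iff]
  lia

lemma mem_rightEdge_iff {i : Fin m} {v : Fin m × Fin (2 + n + 2)} :
    v ∈ rightEdge m n i ↔ v.1 = i ∧ n + 2 ≤ (v.2 : ℕ) := by
  simp only [rightEdge, Sym2.mem_iff, Prod.ext_iff, Fin.ext_iff]
  lia

lemma mem_sideEdges_iff {e : Sym2 (Fin m × Fin (2 + n + 2))} :
    e ∈ sideEdges m n ↔ ∃ i, e = leftEdge m n i ∨ e = rightEdge m n i := by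
  simp [sideEdges, exists_or, eq_comm]

lemma isPMOutside_sideEdges (m n : ℕ) :
    IsPMOutside (negGrid m (2 + n)) (Set.range (innerGrid m n)) (sideEdges m n) where
  mem_edgeSet e he := by
    obtain ⟨i, rfl | rfl⟩ := mem_sideEdges_iff.1 he
    · simp [leftEdge, negGrid_adj_iff]
    · simp [rightEdge, negGrid_adj_iff]
  notMem e he v hv := by
    rw [mem_range_innerGrid_iff]
    obtain ⟨i, rfl | rfl⟩ := mem_sideEdges_iff.1 he
    · have := (mem_leftEdge_iff.1 hv).2
      lia
    · have := (mem_rightEdge_iff.1 hv).2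
      lia
  existsUnique v hv := by
    rw [mem_range_innerGrid_iff] at hv
    by_cases hleft : (v.2 : ℕ) ≤ 1
    · refine ⟨leftEdge m n v.1, ⟨mem_sideEdges_iff.2 ⟨_, .inl rfl⟩,
        mem_leftEdge_iff.2 ⟨rfl, hleft⟩⟩, ?_⟩
      rintro e ⟨he, hve⟩
      obtain ⟨i, rfl | rfl⟩ := mem_sideEdges_iff.1 he
      · rw [(mem_leftEdge_iff.1 hve).1]
      · have := (mem_rightEdge_iff.1 hve).2
        lia
    · refine ⟨rightEdge m n v.1, ⟨mem_sideEdges_iff.2 ⟨_, .inr rfl⟩,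
        mem_rightEdge_iff.2 ⟨rfl, by lia⟩⟩, ?_⟩
      rintro e ⟨he, hve⟩
      obtain ⟨i, rfl | rfl⟩ := mem_sideEdges_iff.1 he
      · exact absurd (mem_leftEdge_iff.1 hve).2 hleft
      · rw [(mem_rightEdge_iff.1 hve).1]

lemma sideEdges_subset {Q : Finset (Sym2 (Fin m × Fin (2 + n + 2)))}
    (hQ : IsPM (negGrid m (2 + n)) Q) : sideEdges m n ⊆ Q := by
  intro e he
  obtain ⟨i, rfl | rfl⟩ := mem_sideEdges_iff.1 he <;>
  · refine hQ.mk_mem_of_forall_adj_eq fun x hx => ?_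
    simp only [negGrid_adj_iff, Prod.ext_iff, Fin.ext_iff] at hx ⊢
    lia

end

lemma card_pmFinset_negGrid (m n : ℕ) : #(pmFinset (negGrid m (2 + n))) = T m n := by
  rw [T_eq_card_pmFinset]
  exact (isPMOutside_sideEdges m n).card_pmFinset_eq fun _ => sideEdges_subset

/-- The extrapolated tiling count T(m,−2−n) equals the signed matching count of
`G(m,-(2+n))`, and the reciprocity relation holds. -/
theorem signed_matchings_give_reciprocity (m n : ℕ) (hm : 1 ≤ m) :
    Msigned m (2 + n) = eps m n * (T m n : ℤ) := by
  rw [Msigned_eq_eps_mul_card, card_pmFinset_negGrid, add_comm 2 n, eps_add_two]
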